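/- For every legal sequence σ of moves in the auxiliary game whose initial position equals its resulting position, the flow through the cycle vertices does not depend on the vertex: F(σ, 0, t) = F(σ, 0, t′) for all t, t′ ∈ ℤ/3mℤ. -/

import Mathlib

/-!
The auxiliary game of Shitov, "Chess God's number grows exponentially".

Fix `m ≥ 1`.  The graph `G` has cycle vertices `(0,t)` for `t ∈ ℤ/3m` and triangle
vertices `(i,j)` for `1 ≤ i ≤ m`, `j ∈ {1,2,3}`.  We use 0-based indices: the
triangle vertex `(i,j)` of the paper (with `1 ≤ i ≤ m`, `1 ≤ j ≤ 3`) is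
`Vtx.tri ⟨i-1⟩ ⟨j-1⟩`, and its paired cycle vertex `(0, 3i+j-3)` is
`Vtx.cycle (pairC ⟨i-1⟩ ⟨j-1⟩)` where `pairC i j = 3*i + j + 1 (mod 3m)`.
-/

namespace AuxGame

/-- What occupies a vertex: nothing, the chip, or a switch. -/
inductive Occ : Type
  | empty : Occ
  | chip : Occ
  | switch : Occ
deriving DecidableEq

/-- Vertices of the graph `G`: the big cycle of length `3m`, and `m` triangles. -/
inductive Vtx (m : ℕ) : Type
  | cycle : ZMod (3 * m) → Vtx m
  | tri : Fin m → ZMod 3 → Vtx m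
deriving DecidableEq

/-- The cycle vertex paired with the triangle vertex `(i,j)` (0-based):
this is the vertex `(0, 3i+j-3)` of the paper. -/
def pairC {m : ℕ} (i : Fin m) (j : ZMod 3) : ZMod (3 * m) :=
  ((3 * i.val + j.val + 1 : ℕ) : ZMod (3 * m))

/-- Adjacency in `G`: consecutive vertices of the big cycle, and distinct
vertices of one triangle. -/
def Adjacent {m : ℕ} : Vtx m → Vtx m → Prop
  | .cycle t, .cycle t' => t' = t + 1 ∨ t' = t - 1
  | .tri i j, .tri i' j' => i = i' ∧ j ≠ j'
  | _, _ => False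

/-- `u` and `v` form a pair `{(i,j), (0,3i+j-3)}` (in either order). -/
def IsPair {m : ℕ} : Vtx m → Vtx m → Prop
  | .tri i j, .cycle t => t = pairC i j
  | .cycle t, .tri i j => t = pairC i j
  | _, _ => False

/-- A position of the auxiliary game: every vertex is empty, or carries the chip,
or carries (exactly) one switch; there is exactly one chip; and for every pair
`{(i,j), (0,3i+j-3)}` at least one of the two vertices carries a switch. -/
structure Pos (m : ℕ) where
  occ : Vtx m → Occ
  chip_exists_unique : ∃! v : Vtx m, occ v = Occ.chip
  switch_pair : ∀ (i : Fin m) (j : ZMod 3),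
    occ (Vtx.tri i j) = Occ.switch ∨ occ (Vtx.cycle (pairC i j)) = Occ.switch

/-- A single move: the chip moves from vertex `from'` to vertex `to'`,
transforming position `src` into position `dst`. -/
structure Move (m : ℕ) where
  src : Pos m
  dst : Pos m
  from' : Vtx m
  to' : Vtx m

/-- Legality of a single move: either a *jump* (the chip moves to an adjacent
vacant vertex of its triangle, or to an adjacent vacant vertex of the cycle),
or a *swap* (the chip, standing on one vertex of a pair, is exchanged with the
switch on the other vertex of that pair).  In both cases the destination gets
the chip, the source gets whatever was at the destination (nothing for a jump,
the switch for a swap), and all other vertices are unchanged. -/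
def Move.Legal {m : ℕ} (mv : Move m) : Prop :=
  mv.src.occ mv.from' = Occ.chip ∧
  ((Adjacent mv.from' mv.to' ∧ mv.src.occ mv.to' = Occ.empty) ∨
    (IsPair mv.from' mv.to' ∧ mv.src.occ mv.to' = Occ.switch)) ∧
  mv.dst.occ mv.to' = Occ.chip ∧
  mv.dst.occ mv.from' = mv.src.occ mv.to' ∧
  ∀ w : Vtx m, w ≠ mv.from' → w ≠ mv.to' → mv.dst.occ w = mv.src.occ w

/-- `Leads σ A B`: `σ` is a legal sequence of moves with initial position `A`
and resulting position `B` (each move is legal, and the resulting position of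
each move is the initial position of the next one). -/
inductive Leads {m : ℕ} : List (Move m) → Pos m → Pos m → Prop
  | nil (A : Pos m) : Leads [] A A
  | cons (mv : Move m) (σ : List (Move m)) (B : Pos m) :
      mv.Legal → Leads σ mv.dst B → Leads (mv :: σ) mv.src B

/-- `σ` is a legal sequence of moves. -/
def LegalSeq {m : ℕ} (σ : List (Move m)) : Prop :=
  ∃ A B : Pos m, Leads σ A B

/-- `#(σ, u, v)`: the number of single moves in `σ` carrying the chip from
vertex `u` to vertex `v` (used with `u`, `v` in one component, where such moves
are exactly jumps). -/
def jmpCount {m : ℕ} (σ : List (Move m)) (u v : Vtx m) : ℕ :=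
  (σ.filter fun mv => decide (mv.from' = u ∧ mv.to' = v)).length

/-- The successor of a vertex in its own component: `(0,t) ↦ (0,t+1)` and
`(i,j) ↦ (i,j+1 mod 3)`. -/
def nxt {m : ℕ} : Vtx m → Vtx m
  | .cycle t => .cycle (t + 1)
  | .tri i j => .tri i (j + 1)

/-- The predecessor of a vertex in its own component. -/
def prv {m : ℕ} : Vtx m → Vtx m
  | .cycle t => .cycle (t - 1)
  | .tri i j => .tri i (j - 1)

/-- Twice the flow through a vertex `v = (i₀,j₀)`:
`#(σ,i₀,j₀-1,j₀) + #(σ,i₀,j₀,j₀+1) - #(σ,i₀,j₀+1,j₀) - #(σ,i₀,j₀,j₀-1)` as an integer. -/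
def dflow {m : ℕ} (σ : List (Move m)) (v : Vtx m) : ℤ :=
  (jmpCount σ (prv v) v : ℤ) + (jmpCount σ v (nxt v) : ℤ)
    - (jmpCount σ (nxt v) v : ℤ) - (jmpCount σ v (prv v) : ℤ)

/-- The flow `F(σ, i₀, j₀)` through the vertex `v = (i₀,j₀)`. -/
def flow {m : ℕ} (σ : List (Move m)) (v : Vtx m) : ℚ :=
  (dflow σ v : ℚ) / 2

/-- `P` is the starting position: switches on `(i,1)`, `(i,3)`, `(0,3i-1)`
(0-based: `tri i 0`, `tri i 2`, `cycle (pairC i 1)`), the chip on some cycle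
vertex not of the form `(0,3i-1)`, and all other vertices empty. -/
def IsStarting {m : ℕ} (P : Pos m) : Prop :=
  (∀ i : Fin m,
    P.occ (Vtx.tri i 0) = Occ.switch ∧
    P.occ (Vtx.tri i 1) = Occ.empty ∧
    P.occ (Vtx.tri i 2) = Occ.switch ∧
    P.occ (Vtx.cycle (pairC i 1)) = Occ.switch) ∧
  ∃ t : ZMod (3 * m),
    (∀ i : Fin m, t ≠ pairC i 1) ∧
    P.occ (Vtx.cycle t) = Occ.chip ∧
    ∀ s : ZMod (3 * m), s ≠ t → (∀ i : Fin m, s ≠ pairC i 1) →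
      P.occ (Vtx.cycle s) = Occ.empty

end AuxGame

/-!
A jump changes the set of occupied vertices exactly at its two endpoints, and a swap does not change
it at all.  Hence the net number of jumps entering a vertex along its component is the change in the
occupancy of that vertex.  If the initial and the final position occupy the same vertices, the jumps
therefore form a circulation on each component, so the net number of jumps across an edge, and with
it the flow, is the same all around the component.
-/

namespace AuxGame

variable {m : ℕ} {A B : Pos m} {σ : List (Move m)} {mv : Move m} {u v : Vtx m}

/-- The indicator of the vertices that are not vacant in the position `P`: it is `1` on the chip and
on every switch, and it takes values in `ℤ` so that changes in occupancy are differences. -/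
def occupancy (P : Pos m) (v : Vtx m) : ℤ :=
  if P.occ v = Occ.empty then 0 else 1

/-- The net number of moves of `σ` carrying the chip across the edge from `u` to `v`, moves from
`v` to `u` being counted negatively. -/
def netJumps (σ : List (Move m)) (u v : Vtx m) : ℤ :=
  jmpCount σ u v - jmpCount σ v u

theorem occupancy_congr (h : A.occ v = Occ.empty ↔ B.occ v = Occ.empty) :
    occupancy A v = occupancy B v := by
  simp only [occupancy, h]

theorem dflow_eq_netJumps_add_netJumps (σ : List (Move m)) (v : Vtx m) :
    dflow σ v = netJumps σ (prv v) v + netJumps σ v (nxt v) := by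
  unfold dflow netJumps
  ring

@[simp]
theorem prv_nxt (v : Vtx m) : prv (nxt v) = v := by
  cases v <;> simp [nxt, prv]

@[simp]
theorem nxt_prv (v : Vtx m) : nxt (prv v) = v := by
  cases v <;> simp [nxt, prv]

theorem add_one_ne_sub_one_of_three_dvd {n : ℕ} (hn : 3 ∣ n) (t : ZMod n) : t + 1 ≠ t - 1 := by
  intro h
  have two_eq_zero : (2 : ZMod n) = 0 := by linear_combination h
  have image_eq_zero : (2 : ZMod 3) = 0 := by
    simpa only [map_ofNat, map_zero] using congrArg (ZMod.castHom hn (ZMod 3)) two_eq_zero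
  exact absurd image_eq_zero (by decide)

theorem nxt_ne_prv (v : Vtx m) : nxt v ≠ prv v := by
  cases v <;> simp [nxt, prv, add_one_ne_sub_one_of_three_dvd]

theorem Adjacent.eq_nxt_or_eq_prv (h : Adjacent u v) : v = nxt u ∨ v = prv u := by
  rcases u with t | ⟨i, j⟩ <;> rcases v with t' | ⟨i', j'⟩ <;> simp only [Adjacent] at h
  · simpa [nxt, prv] using h
  · obtain ⟨rfl, hj⟩ := h
    have eq_add_one_or_eq_sub_one : ∀ a b : ZMod 3, a ≠ b → b = a + 1 ∨ b = a - 1 := by decide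
    simpa [nxt, prv] using eq_add_one_or_eq_sub_one j j' hj

theorem IsPair.not_adjacent (h : IsPair u v) : ¬ Adjacent u v := by
  cases u <;> cases v <;> simp_all [IsPair, Adjacent]

theorem IsPair.ne_nxt (h : IsPair u v) : v ≠ nxt u := by
  cases u <;> cases v <;> simp_all [IsPair, nxt]

theorem IsPair.ne_prv (h : IsPair u v) : v ≠ prv u := by
  cases u <;> cases v <;> simp_all [IsPair, prv]

theorem netJumps_cons (mv : Move m) (σ : List (Move m)) (u v : Vtx m) :
    netJumps (mv :: σ) u v = netJumps [mv] u v + netJumps σ u v := by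
  have jmpCount_cons (a b : Vtx m) :
      jmpCount (mv :: σ) a b = jmpCount [mv] a b + jmpCount σ a b := by
    simp only [jmpCount, ← List.length_append, ← List.filter_append, List.singleton_append]
  simp only [netJumps, jmpCount_cons]
  push_cast
  ring

theorem netJumps_singleton (mv : Move m) (u v : Vtx m) :
    netJumps [mv] u v = (if mv.from' = u ∧ mv.to' = v then 1 else 0) -
      (if mv.from' = v ∧ mv.to' = u then 1 else 0) := by
  have jmpCount_singleton (a b : Vtx m) :
      jmpCount [mv] a b = if mv.from' = a ∧ mv.to' = b then 1 else 0 := by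
    by_cases h : mv.from' = a ∧ mv.to' = b <;> simp [jmpCount, h]
  simp only [netJumps, jmpCount_singleton, Nat.cast_ite, Nat.cast_one, Nat.cast_zero]

theorem netJumps_singleton_sub_of_adjacent (h : Adjacent mv.from' mv.to') (v : Vtx m) :
    netJumps [mv] (prv v) v - netJumps [mv] v (nxt v) =
      (if mv.to' = v then 1 else 0) - (if mv.from' = v then 1 else 0) := by
  -- As `nxt v ≠ prv v`, a jump with an endpoint at `v` is counted across only one edge at `v`.
  have hv : nxt v ≠ prv v := nxt_ne_prv v
  simp only [netJumps_singleton]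
  rcases h.eq_nxt_or_eq_prv with hto | hto <;> grind [prv_nxt, nxt_prv]

theorem netJumps_singleton_sub_of_isPair (h : IsPair mv.from' mv.to') (v : Vtx m) :
    netJumps [mv] (prv v) v - netJumps [mv] v (nxt v) = 0 := by
  have hne_nxt := h.ne_nxt
  have hne_prv := h.ne_prv
  simp only [netJumps_singleton]
  grind [prv_nxt, nxt_prv]

theorem Move.Legal.occ_to_eq_empty (h : mv.Legal) (hadj : Adjacent mv.from' mv.to') :
    mv.src.occ mv.to' = Occ.empty :=
  (h.2.1.resolve_right fun hswap => hswap.1.not_adjacent hadj).2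

theorem Move.Legal.occ_to_eq_switch (h : mv.Legal) (hpair : IsPair mv.from' mv.to') :
    mv.src.occ mv.to' = Occ.switch :=
  (h.2.1.resolve_left fun hjump => hpair.not_adjacent hjump.1).2

theorem Move.Legal.occupancy_sub_of_adjacent (h : mv.Legal) (hadj : Adjacent mv.from' mv.to')
    (v : Vtx m) :
    occupancy mv.dst v - occupancy mv.src v =
      (if mv.to' = v then 1 else 0) - (if mv.from' = v then 1 else 0) := by
  have hvacant := h.occ_to_eq_empty hadj
  obtain ⟨hsrc_from, -, hdst_to, hdst_from, hrest⟩ := h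
  by_cases hto : mv.to' = v
  · have hne : mv.from' ≠ v := by
      rintro rfl
      simp [hto, hsrc_from] at hvacant
    subst hto
    simp [occupancy, hdst_to, hvacant, hne]
  by_cases hfrom : mv.from' = v
  · subst hfrom
    simp [occupancy, hdst_from, hsrc_from, hvacant, hto]
  · simp [occupancy, hrest v (Ne.symm hfrom) (Ne.symm hto), hfrom, hto]

theorem Move.Legal.occupancy_eq_of_isPair (h : mv.Legal) (hpair : IsPair mv.from' mv.to')
    (v : Vtx m) : occupancy mv.dst v = occupancy mv.src v := by
  have hswitch := h.occ_to_eq_switch hpair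
  obtain ⟨hsrc_from, -, hdst_to, hdst_from, hrest⟩ := h
  by_cases hto : v = mv.to'
  · simp [occupancy, hto, hdst_to, hswitch]
  by_cases hfrom : v = mv.from'
  · simp [occupancy, hfrom, hdst_from, hsrc_from, hswitch]
  · simp only [occupancy, hrest v hfrom hto]

theorem Move.Legal.netJumps_singleton_sub (h : mv.Legal) (v : Vtx m) :
    netJumps [mv] (prv v) v - netJumps [mv] v (nxt v) =
      occupancy mv.dst v - occupancy mv.src v := by
  rcases h.2.1 with ⟨hadj, -⟩ | ⟨hpair, -⟩
  · rw [netJumps_singleton_sub_of_adjacent hadj, h.occupancy_sub_of_adjacent hadj]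
  · rw [netJumps_singleton_sub_of_isPair hpair, h.occupancy_eq_of_isPair hpair, sub_self]

theorem Leads.netJumps_sub (h : Leads σ A B) (v : Vtx m) :
    netJumps σ (prv v) v - netJumps σ v (nxt v) = occupancy B v - occupancy A v := by
  induction h with
  | nil A => simp [netJumps, jmpCount]
  | cons mv σ B hlegal _ ih =>
    have hmv := hlegal.netJumps_singleton_sub v
    rw [netJumps_cons mv σ (prv v), netJumps_cons mv σ v]
    linarith

theorem Leads.dflow_nxt_sub (h : Leads σ A B) (v : Vtx m) :
    dflow σ (nxt v) - dflow σ v =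
      (occupancy A v - occupancy B v) + (occupancy A (nxt v) - occupancy B (nxt v)) := by
  have hv := h.netJumps_sub v
  have hnxt := h.netJumps_sub (nxt v)
  rw [prv_nxt] at hnxt
  rw [dflow_eq_netJumps_add_netJumps, dflow_eq_netJumps_add_netJumps, prv_nxt]
  linarith

theorem Leads.flow_nxt (h : Leads σ A B) (hv : A.occ v = Occ.empty ↔ B.occ v = Occ.empty)
    (hnxt : A.occ (nxt v) = Occ.empty ↔ B.occ (nxt v) = Occ.empty) :
    flow σ (nxt v) = flow σ v := by
  have hsub := h.dflow_nxt_sub v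
  rw [occupancy_congr hv, occupancy_congr hnxt, sub_self, sub_self, add_zero, sub_eq_zero] at hsub
  rw [flow, flow, hsub]

theorem apply_eq_of_periodic_one {n : ℕ} {α : Type*} {f : ZMod n → α} (hf : Function.Periodic f 1)
    (t t' : ZMod n) : f t = f t' := by
  obtain ⟨k, hk⟩ := ZMod.intCast_surjective (t - t')
  calc f t = f (t' + k * 1) := by rw [hk, mul_one, add_sub_cancel]
    _ = f t' := hf.int_mul k t'

end AuxGame

open AuxGame in
theorem statement7_general {m : ℕ} {A B : Pos m} {σ : List (Move m)} (hσ : Leads σ A B)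
    (hAB : ∀ s : ZMod (3 * m),
      A.occ (Vtx.cycle s) = Occ.empty ↔ B.occ (Vtx.cycle s) = Occ.empty)
    (t t' : ZMod (3 * m)) :
    flow σ (Vtx.cycle t) = flow σ (Vtx.cycle t') :=
  apply_eq_of_periodic_one (f := fun s => flow σ (Vtx.cycle s))
    (fun s => hσ.flow_nxt (v := Vtx.cycle s) (hAB s) (hAB (s + 1))) t t'

open AuxGame in
/-- For every legal sequence `σ` whose initial position equals
its resulting position, the flow through the cycle vertices does not depend on
the vertex: `F(σ,0,t) = F(σ,0,t')` for all `t, t' ∈ ℤ/3m`. -/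
theorem statement7 (m : ℕ) (hm : 1 ≤ m) (A : Pos m) (σ : List (Move m))
    (hσ : Leads σ A A) (t t' : ZMod (3 * m)) :
    flow σ (Vtx.cycle t) = flow σ (Vtx.cycle t') :=
  statement7_general hσ (fun _ => Iff.rfl) t t'
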